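/- The level-two Eisenstein-type series satisfy Ramamani's analogue of the Ramanujan system: for every τ ∈ ℍ, 𝒫'(τ) = (𝒫(τ)² − 𝒬(τ))/4, 𝒫̃'(τ) = (𝒫(τ)𝒫̃(τ) − 𝒬(τ))/2, and 𝒬'(τ) = (𝒫(τ) − 𝒫̃(τ))𝒬(τ). -/

import Mathlib

open Complex

noncomputable section

/-- The normalized derivative `F' = (2πi)⁻¹ dF/dτ`. -/
def nderiv (F : ℂ → ℂ) : ℂ → ℂ := fun τ => (2 * Real.pi * Complex.I)⁻¹ * deriv F τ

/-- `q = e^{2πiτ}`. -/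
def qq (τ : ℂ) : ℂ := Complex.exp (2 * Real.pi * Complex.I * τ)

/-- The level-two Eisenstein series `𝒫(τ) = 1 − 8 Σ_{n≥1} (−1)ⁿ n qⁿ/(1−qⁿ)`. -/
def EP : ℂ → ℂ := fun τ =>
  1 - 8 * ∑' n : ℕ, (-1 : ℂ) ^ (n + 1) * ((n : ℂ) + 1) * qq τ ^ (n + 1) / (1 - qq τ ^ (n + 1))

/-- The level-two Eisenstein series `𝒬(τ) = 1 + 16 Σ_{n≥1} (−1)ⁿ n³ qⁿ/(1−qⁿ)`. -/
def EQ : ℂ → ℂ := fun τ =>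
  1 + 16 * ∑' n : ℕ, (-1 : ℂ) ^ (n + 1) * ((n : ℂ) + 1) ^ 3 * qq τ ^ (n + 1) / (1 - qq τ ^ (n + 1))

/-- The level-two modular form `𝒫̃(τ) = 1 + 24 Σ_{n≥1} n qⁿ/(1+qⁿ)`. -/
def EPt : ℂ → ℂ := fun τ =>
  1 + 24 * ∑' n : ℕ, ((n : ℂ) + 1) * qq τ ^ (n + 1) / (1 + qq τ ^ (n + 1))

/-! With `E₂`, `E₄` the Eisenstein series of level one, `𝒫̃ = 2 E₂(2τ) - E₂(τ)` and
`15 𝒬 = 16 E₄(2τ) - E₄(τ)` are modular forms for `Γ₀(2)` of weights two and four, while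
`3 𝒫 = 2 𝒫̃ + E₂` is only quasimodular. The three equations become identities of weight four or six
between modular forms: they compute the Serre derivatives of `𝒫̃` and `𝒬`, and the level one form
`E₂² - 12 E₂'`, in terms of `𝒫̃` and `𝒬`. A form of weight less than eight for `Γ₀(2)` is determined
by its constant terms at the cusps `∞` and `0`: if both vanish, then for `φ = 𝒫̃` the traces to
level one of `f`, `f φ`, `f φ²` are cusp forms of weight less than twelve, hence zero, which forces
`f = 0`. -/

open UpperHalfPlane hiding I
open Filter Topology EisensteinSeries CongruenceSubgroup
open scoped ModularForm MatrixGroups Manifold Derivative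

/-- The matrix `diag(a, d)`, acting on `ℍ` by `z ↦ (a / d) z`; it is used to pass from level one
to level `Γ₀(2)`. -/
def diagGL (a d : ℕ) [NeZero a] [NeZero d] : GL (Fin 2) ℝ :=
  Matrix.GeneralLinearGroup.mkOfDetNeZero !![(a : ℝ), 0; 0, d] (by simp [NeZero.ne])

section Scaling

variable (a d : ℕ) [NeZero a] [NeZero d]

lemma coe_diagGL : (diagGL a d : Matrix (Fin 2) (Fin 2) ℝ) = !![(a : ℝ), 0; 0, d] := rfl

lemma det_diagGL : (diagGL a d).det.val = a * d := by
  simp [coe_diagGL]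

lemma det_diagGL_pos : 0 < (diagGL a d).det.val := by
  rw [det_diagGL]
  exact_mod_cast Nat.mul_pos (NeZero.pos a) (NeZero.pos d)

lemma coe_diagGL_smul (z : ℍ) : ((diagGL a d • z : ℍ) : ℂ) = a / d * z := by
  rw [coe_smul_of_det_pos (det_diagGL_pos a d)]
  simp [num, denom, coe_diagGL, div_mul_eq_mul_div]

lemma slash_diagGL_apply (k : ℤ) (f : ℍ → ℂ) (z : ℍ) :
    (f ∣[k] diagGL a d) z = f (diagGL a d • z) * (a * d) ^ (k - 1) * (d : ℂ) ^ (-k) := by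
  have hdet := det_diagGL_pos a d
  rw [ModularForm.slash_apply, σ, if_pos hdet, abs_of_pos hdet, det_diagGL]
  simp [denom, coe_diagGL]

variable {k : ℤ} {f : ℍ → ℂ}

lemma slash_diagGL_slash_S (hf : f ∣[k] ModularGroup.S = f) :
    (f ∣[k] diagGL a d) ∣[k] ModularGroup.S = f ∣[k] diagGL d a := by
  have key : diagGL a d * (ModularGroup.S : GL (Fin 2) ℝ)
      = (ModularGroup.S : GL (Fin 2) ℝ) * diagGL d a := by
    ext i j
    fin_cases i <;> fin_cases j <;>
      simp [coe_diagGL, Matrix.mul_apply, Matrix.SpecialLinearGroup.map_apply_coe]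
  rw [ModularForm.SL_slash, ← SlashAction.slash_mul, key, SlashAction.slash_mul,
    ← ModularForm.SL_slash, hf]

/-- Conjugation by `diag(N, 1)` embeds `Γ₀(N)` into `SL(2, ℤ)`. -/
lemma exists_diagGL_mul_eq_mul_diagGL (N : ℕ) [NeZero N] {γ : SL(2, ℤ)} (hγ : γ ∈ Gamma0 N) :
    ∃ γ' : SL(2, ℤ), diagGL N 1 * (γ : GL (Fin 2) ℝ) = (γ' : GL (Fin 2) ℝ) * diagGL N 1 := by
  obtain ⟨c, hc⟩ := (ZMod.intCast_zmod_eq_zero_iff_dvd _ N).mp (Gamma0_mem.mp hγ)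
  have hdet := γ.det_coe
  rw [Matrix.det_fin_two, hc] at hdet
  obtain ⟨γ', hγ'⟩ : ∃ γ' : SL(2, ℤ), γ'.val = !![γ 0 0, N * γ 0 1; c, γ 1 1] :=
    ⟨⟨_, by rw [Matrix.det_fin_two_of]; linear_combination hdet⟩, rfl⟩
  refine ⟨γ', ?_⟩
  ext i j
  fin_cases i <;> fin_cases j <;>
    simp [coe_diagGL, Matrix.mul_apply, hγ', hc, mul_comm]

lemma slash_diagGL_slash_of_mem_Gamma0 (N : ℕ) [NeZero N] (hf : ∀ γ : SL(2, ℤ), f ∣[k] γ = f)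
    {γ : SL(2, ℤ)} (hγ : γ ∈ Gamma0 N) : (f ∣[k] diagGL N 1) ∣[k] γ = f ∣[k] diagGL N 1 := by
  obtain ⟨γ', h⟩ := exists_diagGL_mul_eq_mul_diagGL N hγ
  rw [ModularForm.SL_slash, ← SlashAction.slash_mul, h, SlashAction.slash_mul,
    ← ModularForm.SL_slash, hf]

lemma tendsto_slash_diagGL {l : ℂ} (hf : Tendsto f atImInfty (𝓝 l)) :
    Tendsto (f ∣[k] diagGL a d) atImInfty
      (𝓝 (l * (a * d) ^ (k - 1) * (d : ℂ) ^ (-k))) := by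
  simp only [funext (slash_diagGL_apply a d k f)]
  exact ((hf.comp (tendsto_smul_atImInfty (by simp [coe_diagGL]))).mul_const _).mul_const _

end Scaling

/-- The Lambert series `∑ nᵏ rⁿ / (1 - rⁿ)`. Its term at `n = 0` is `0`, since `x / 0 = 0`. -/
def lambertSeries (k : ℕ) (r : ℂ) : ℂ := ∑' n : ℕ, (n : ℂ) ^ k * r ^ n / (1 - r ^ n)

section LambertSeries

variable (k : ℕ) {r : ℂ}

lemma lambertSeries_eq_tsum_succ (hr : ‖r‖ < 1) :
    lambertSeries k r = ∑' n : ℕ, ((n : ℂ) + 1) ^ k * r ^ (n + 1) / (1 - r ^ (n + 1)) := by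
  rw [lambertSeries, (summable_norm_pow_mul_geometric_div_one_sub k hr).tsum_eq_zero_add]
  simp

lemma lambertSeries_eq_tsum_sigma (hr : ‖r‖ < 1) :
    lambertSeries k r = ∑' n : ℕ+, (ArithmeticFunction.sigma k n : ℂ) * r ^ (n : ℕ) := by
  rw [← tsum_pow_div_one_sub_eq_tsum_sigma hr k, lambertSeries_eq_tsum_succ k hr,
    tsum_pnat_eq_tsum_succ (f := fun n : ℕ => (n : ℂ) ^ k * r ^ n / (1 - r ^ n))]
  push_cast
  rfl

lemma tendsto_lambertSeries : Tendsto (lambertSeries k) (𝓝 0) (𝓝 0) := by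
  have small : ∀ᶠ r : ℂ in 𝓝 0, ‖r‖ < 1 / 2 :=
    (continuous_norm.tendsto' 0 0 norm_zero).eventually_lt_const (by norm_num)
  have bound : Summable fun n : ℕ+ => ((n : ℕ) : ℝ) ^ (k + 1) * (1 / 2 : ℝ) ^ (n : ℕ) :=
    (summable_pow_mul_geometric_of_norm_lt_one (R := ℝ) (k + 1) (by norm_num)).comp_injective
      PNat.coe_injective
  have lim := tendsto_tsum_of_dominated_convergence (𝓕 := 𝓝 (0 : ℂ)) (g := fun _ => 0)
    (f := fun r (n : ℕ+) => (ArithmeticFunction.sigma k n : ℂ) * r ^ (n : ℕ)) bound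
    (fun n => by simpa using ((continuous_pow (n : ℕ)).const_mul _).tendsto (0 : ℂ)) <| by
      filter_upwards [small] with r hr n
      rw [norm_mul, norm_pow, Complex.norm_natCast]
      gcongr
      exact_mod_cast ArithmeticFunction.sigma_le_pow_succ k n
  rw [tsum_zero] at lim
  refine lim.congr' ?_
  filter_upwards [small] with r hr
  exact (lambertSeries_eq_tsum_sigma k (by linarith)).symm

lemma tsum_neg_one_pow_mul {t : ℕ → ℂ} (ht : Summable t) :
    ∑' n, (-1) ^ n * t n = 2 * ∑' n, t (2 * n) - ∑' n, t n := by
  have split {u : ℕ → ℂ} (hu : Summable u) :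
      ∑' n, u (2 * n) + ∑' n, u (2 * n + 1) = ∑' n, u n :=
    tsum_even_add_odd (hu.comp_injective fun a b h => by simpa using h)
      (hu.comp_injective fun a b h => by simpa using h)
  rw [← split ht, ← split (.of_norm (by simpa using ht.norm))]
  simp only [pow_add, pow_mul, neg_one_sq, one_pow, one_mul, pow_one, neg_mul, tsum_neg]
  ring

lemma tsum_neg_one_pow_mul_lambert (hr : ‖r‖ < 1) :
    ∑' n : ℕ, (-1) ^ (n + 1) * ((n : ℂ) + 1) ^ k * r ^ (n + 1) / (1 - r ^ (n + 1))
      = 2 ^ (k + 1) * lambertSeries k (r ^ 2) - lambertSeries k r := by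
  let t (n : ℕ) : ℂ := (n : ℂ) ^ k * r ^ n / (1 - r ^ n)
  have ht : Summable t := summable_norm_pow_mul_geometric_div_one_sub k hr
  have even_terms : ∑' n, t (2 * n) = 2 ^ k * lambertSeries k (r ^ 2) := by
    rw [lambertSeries, ← tsum_mul_left]
    refine tsum_congr fun n => ?_
    simp only [t, ← pow_mul, Nat.cast_mul, Nat.cast_ofNat, mul_pow]
    ring
  calc _ = ∑' n : ℕ, (-1) ^ (n + 1) * t (n + 1) :=
        tsum_congr fun n => by simp only [t, Nat.cast_succ]; ring
    _ = ∑' n : ℕ, (-1) ^ n * t n := by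
        have ht' : Summable fun n => (-1) ^ n * t n := .of_norm (by simpa using ht.norm)
        rw [ht'.tsum_eq_zero_add]
        simp [t]
    _ = 2 ^ (k + 1) * lambertSeries k (r ^ 2) - lambertSeries k r := by
        rw [tsum_neg_one_pow_mul ht, even_terms, pow_succ' 2 k, mul_assoc]
        rfl

lemma tsum_lambert_one_add (hr : ‖r‖ < 1) :
    ∑' n : ℕ, ((n : ℂ) + 1) ^ k * r ^ (n + 1) / (1 + r ^ (n + 1))
      = lambertSeries k r - 2 * lambertSeries k (r ^ 2) := by
  have norm_pow_lt {n : ℕ} (hn : n ≠ 0) : ‖r ^ n‖ < 1 := by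
    rw [norm_pow]
    exact pow_lt_one₀ (norm_nonneg r) hr hn
  have summable {s : ℂ} (hs : ‖s‖ < 1) :
      Summable fun n : ℕ => ((n : ℂ) + 1) ^ k * s ^ (n + 1) / (1 - s ^ (n + 1)) := by
    have := (summable_norm_pow_mul_geometric_div_one_sub k hs).comp_injective Nat.succ_injective
    simpa only [Function.comp_def, Nat.succ_eq_add_one, Nat.cast_add, Nat.cast_one] using this
  have partial_fractions {x : ℂ} (hx : ‖x‖ < 1) :
      x / (1 + x) = x / (1 - x) - 2 * (x ^ 2 / (1 - x ^ 2)) := by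
    have hsub : 1 - x ≠ 0 := sub_ne_zero.mpr (by rintro rfl; simp at hx)
    have hadd : 1 + x ≠ 0 := fun h => by simp [eq_neg_of_add_eq_zero_right h] at hx
    rw [show 1 - x ^ 2 = (1 - x) * (1 + x) by ring]
    field_simp
    ring
  have hr2 := norm_pow_lt two_ne_zero
  rw [lambertSeries_eq_tsum_succ k hr, lambertSeries_eq_tsum_succ k hr2, ← tsum_mul_left,
    ← (summable hr).tsum_sub ((summable hr2).mul_left 2)]
  refine tsum_congr fun n => ?_
  rw [mul_div_assoc, partial_fractions (norm_pow_lt n.add_one_ne_zero), pow_right_comm]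
  ring

end LambertSeries

section EisensteinSeries

lemma norm_qq_lt_one (z : ℍ) : ‖qq z‖ < 1 := norm_exp_two_pi_I_lt_one z

lemma tendsto_qq_atImInfty : Tendsto (fun z : ℍ => qq z) atImInfty (𝓝 0) := by
  simpa [Function.Periodic.qParam] using! qParam_tendsto_atImInfty one_pos

lemma E2_eq_lambertSeries (z : ℍ) : E2 z = 1 - 24 * lambertSeries 1 (qq z) := by
  rw [E2_eq_tsum_cexp, lambertSeries_eq_tsum_sigma 1 (norm_qq_lt_one z)]
  rfl

lemma E₄_eq_lambertSeries (z : ℍ) : ModularForm.E₄ z = 1 + 240 * lambertSeries 3 (qq z) := by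
  rw [q_expansion_bernoulli _ ⟨2, rfl⟩, lambertSeries_eq_tsum_sigma 3 (norm_qq_lt_one z)]
  norm_num [show bernoulli 4 = -1 / 30 by decide +kernel, qq]

lemma tendsto_E2_atImInfty : Tendsto E2 atImInfty (𝓝 1) := by
  simp only [funext E2_eq_lambertSeries]
  simpa using (((tendsto_lambertSeries 1).comp tendsto_qq_atImInfty).const_mul 24).const_sub 1

lemma tendsto_E₄_atImInfty : Tendsto ModularForm.E₄ atImInfty (𝓝 1) := by
  simp only [funext E₄_eq_lambertSeries]
  simpa using (((tendsto_lambertSeries 3).comp tendsto_qq_atImInfty).const_mul 240).const_add 1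

end EisensteinSeries

lemma tendsto_deriv_comap_im_atTop {F : ℂ → ℂ} {l : ℂ} (hF : DifferentiableOn ℂ F {z | 0 < z.im})
    (hl : Tendsto F (comap Complex.im atTop) (𝓝 l)) :
    Tendsto (deriv F) (comap Complex.im atTop) (𝓝 0) := by
  have basis := (atTop_basis (α := ℝ)).comap Complex.im
  rw [basis.tendsto_iff Metric.nhds_basis_closedBall] at hl ⊢
  intro ε hε
  obtain ⟨A, -, hA⟩ := hl ε hε
  refine ⟨max A 0 + 2, trivial, fun z (hz : max A 0 + 2 ≤ z.im) => ?_⟩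
  have im_large : ∀ w ∈ Metric.closedBall z 1, max A 0 < w.im := fun w hw => by
    have hwz : |(w - z).im| ≤ 1 := (Complex.abs_im_le_norm _).trans (mem_closedBall_iff_norm.mp hw)
    rw [Complex.sub_im] at hwz
    linarith [neg_le_of_abs_le hwz]
  have hdiff : DiffContOnCl ℂ (fun w => F w - l) (Metric.ball z 1) := by
    refine DifferentiableOn.diffContOnCl ?_
    rw [closure_ball z one_ne_zero]
    exact (hF.mono fun w hw => (le_max_right A 0).trans_lt (im_large w hw)).sub_const l
  have cauchy := norm_deriv_le_of_forall_mem_sphere_norm_le one_pos hdiff fun w hw =>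
    mem_closedBall_iff_norm.mp <|
      hA w ((le_max_left A 0).trans (im_large w (Metric.sphere_subset_closedBall hw)).le)
  simpa using cauchy

lemma tendsto_normalizedDeriv_atImInfty {f : ℍ → ℂ} {l : ℂ} (hf : MDiff f)
    (hl : Tendsto f atImInfty (𝓝 l)) : Tendsto (D f) atImInfty (𝓝 0) := by
  have deriv_lim := tendsto_deriv_comap_im_atTop (mdifferentiable_iff.mp hf)
    (hl.comp tendsto_comap_im_ofComplex)
  rw [← mul_zero (2 * Real.pi * I : ℂ)⁻¹]
  exact (deriv_lim.comp tendsto_coe_atImInfty).const_mul _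

lemma tendsto_slash_T {k : ℤ} {f : ℍ → ℂ} {l : ℂ} (hl : Tendsto f atImInfty (𝓝 l)) :
    Tendsto (f ∣[k] ModularGroup.T) atImInfty (𝓝 l) := by
  have hT := hl.comp
    (tendsto_smul_atImInfty (g := (ModularGroup.T : GL (Fin 2) ℝ)) (by simp [ModularGroup.coe_T]))
  refine hT.congr fun z => ?_
  rw [ModularForm.SL_slash_apply, ModularGroup.denom_apply]
  simp [ModularGroup.coe_T]

lemma eq_zero_of_slash_eq_of_weight_lt_twelve {k : ℤ} (hk : k < 12) {f : ℍ → ℂ} (hf : MDiff f)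
    (hS : f ∣[k] ModularGroup.S = f) (hT : f ∣[k] ModularGroup.T = f)
    (h0 : Tendsto f atImInfty (𝓝 0)) : f = 0 := by
  have invariant := SlashInvariantForm.slash_action_generators_SL2Z hS hT
  let c : CuspForm 𝒮ℒ k :=
    { toFun := f
      slash_action_eq' := by
        rintro _ ⟨γ, rfl⟩
        exact invariant γ
      holo' := hf
      zero_at_cusps' := fun hc => by
        rw [Subgroup.IsArithmetic.isCusp_iff_isCusp_SL2Z] at hc
        rw [OnePoint.isZeroAt_iff_forall_SL2Z hc]
        intro γ _
        rw [invariant]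
        exact h0 }
  have hc : c = 0 :=
    rank_zero_iff_forall_zero.mp (CuspForm.rank_eq_zero_of_weight_lt_twelve hk) c
  exact congrArg DFunLike.coe hc

/-- A holomorphic function `f` that is modular of weight `k` for `Γ₀(2)`, with constant terms
`a` and `b` at the two cusps `∞` and `0` of `Γ₀(2)`. -/
structure IsGamma0TwoForm (k : ℤ) (a b : ℂ) (f : ℍ → ℂ) : Prop where
  mdifferentiable : MDiff f
  slash_eq : ∀ γ ∈ Gamma0 2, f ∣[k] γ = f
  tendsto : Tendsto f atImInfty (𝓝 a)
  tendsto_slash_S : Tendsto (f ∣[k] ModularGroup.S) atImInfty (𝓝 b)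

namespace IsGamma0TwoForm

variable {k m : ℤ} {a b c d : ℂ} {f g : ℍ → ℂ}

lemma of_level_one (hf : MDiff f) (hslash : ∀ γ : SL(2, ℤ), f ∣[k] γ = f)
    (ha : Tendsto f atImInfty (𝓝 a)) : IsGamma0TwoForm k a a f where
  mdifferentiable := hf
  slash_eq γ _ := hslash γ
  tendsto := ha
  tendsto_slash_S := by rwa [hslash]

lemma slash_diagGL (hf : MDiff f) (hslash : ∀ γ : SL(2, ℤ), f ∣[k] γ = f)
    (ha : Tendsto f atImInfty (𝓝 a)) :
    IsGamma0TwoForm k (a * 2 ^ (k - 1)) (a / 2) (f ∣[k] diagGL 2 1) where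
  mdifferentiable := hf.slash k _
  slash_eq γ hγ := slash_diagGL_slash_of_mem_Gamma0 2 hslash hγ
  tendsto := by
    have h := tendsto_slash_diagGL 2 1 (k := k) ha
    simpa only [Nat.cast_ofNat, Nat.cast_one, mul_one, one_zpow] using h
  tendsto_slash_S := by
    rw [slash_diagGL_slash_S 2 1 (hslash _),
      show a / 2 = a * ((1 : ℕ) * (2 : ℕ)) ^ (k - 1) * (2 : ℕ) ^ (-k) by
        rw [Nat.cast_one, one_mul, mul_assoc, ← zpow_add₀ (by norm_num), ← sub_eq_add_neg,
          sub_sub_cancel_left, zpow_neg_one, Nat.cast_ofNat, div_eq_mul_inv]]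
    exact tendsto_slash_diagGL 1 2 ha

lemma add (hf : IsGamma0TwoForm k a b f) (hg : IsGamma0TwoForm k c d g) :
    IsGamma0TwoForm k (a + c) (b + d) (f + g) where
  mdifferentiable := hf.mdifferentiable.add hg.mdifferentiable
  slash_eq γ hγ := by rw [SlashAction.add_slash, hf.slash_eq γ hγ, hg.slash_eq γ hγ]
  tendsto := hf.tendsto.add hg.tendsto
  tendsto_slash_S := by
    rw [SlashAction.add_slash]
    exact hf.tendsto_slash_S.add hg.tendsto_slash_S

lemma const_smul (s : ℂ) (hf : IsGamma0TwoForm k a b f) :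
    IsGamma0TwoForm k (s * a) (s * b) (s • f) where
  mdifferentiable := hf.mdifferentiable.const_smul s
  slash_eq γ hγ := by rw [ModularForm.SL_smul_slash, hf.slash_eq γ hγ]
  tendsto := hf.tendsto.const_mul s
  tendsto_slash_S := by
    rw [ModularForm.SL_smul_slash]
    exact hf.tendsto_slash_S.const_mul s

lemma sub (hf : IsGamma0TwoForm k a b f) (hg : IsGamma0TwoForm k c d g) :
    IsGamma0TwoForm k (a - c) (b - d) (f - g) := by
  simpa [sub_eq_add_neg] using hf.add (hg.const_smul (-1))

lemma mul (hf : IsGamma0TwoForm k a b f) (hg : IsGamma0TwoForm m c d g) :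
    IsGamma0TwoForm (k + m) (a * c) (b * d) (f * g) where
  mdifferentiable := hf.mdifferentiable.mul hg.mdifferentiable
  slash_eq γ hγ := by
    rw [ModularForm.mul_slash_SL2, hf.slash_eq γ hγ, hg.slash_eq γ hγ]
  tendsto := hf.tendsto.mul hg.tendsto
  tendsto_slash_S := by
    rw [ModularForm.mul_slash_SL2]
    exact hf.tendsto_slash_S.mul hg.tendsto_slash_S

lemma serreDerivative (hf : IsGamma0TwoForm k a b f) :
    IsGamma0TwoForm (k + 2) (-(k / 12) * a) (-(k / 12) * b) (Derivative.serreDerivative k f) := by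
  have limit {h : ℍ → ℂ} {l : ℂ} (hh : MDiff h) (hl : Tendsto h atImInfty (𝓝 l)) :
      Tendsto (Derivative.serreDerivative k h) atImInfty (𝓝 (-(k / 12) * l)) := by
    convert (tendsto_normalizedDeriv_atImInfty hh hl).sub
      ((tendsto_E2_atImInfty.const_mul (k * 12⁻¹ : ℂ)).mul hl) using 2
    · rfl
    · ring
  refine ⟨Derivative.serreDerivative_mdifferentiable _ hf.mdifferentiable,
    fun γ hγ => Derivative.serreDerivative_slash_invariant hf.mdifferentiable (hf.slash_eq γ hγ),
    limit hf.mdifferentiable hf.tendsto, ?_⟩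
  rw [Derivative.serreDerivative_slash_equivariant hf.mdifferentiable]
  exact limit (hf.mdifferentiable.slash k _) hf.tendsto_slash_S

lemma slash_eq_slash (hf : IsGamma0TwoForm k a b f) {α β : SL(2, ℤ)} (h : α * β⁻¹ ∈ Gamma0 2) :
    f ∣[k] α = f ∣[k] β := by
  rw [← inv_mul_cancel_right α β, SlashAction.slash_mul, hf.slash_eq _ h]

/-- The matrices `1`, `S`, `S T` represent the cosets of `Γ₀(2)` in `SL(2, ℤ)`, so the sum below is
the trace of `f` to level one. -/
lemma add_slash_S_add_slash_S_slash_T_eq_zero (hk : k < 12) (hf : IsGamma0TwoForm k 0 0 f) :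
    f + f ∣[k] ModularGroup.S + (f ∣[k] ModularGroup.S) ∣[k] ModularGroup.T = 0 := by
  have hS := hf.mdifferentiable.slash k (ModularGroup.S : GL (Fin 2) ℝ)
  have hT : f ∣[k] ModularGroup.T = f := hf.slash_eq _ (Gamma0_mem.mpr (by decide))
  have hSS : f ∣[k] (ModularGroup.S * ModularGroup.S) = f :=
    hf.slash_eq _ (Gamma0_mem.mpr (by decide))
  have hSTS : f ∣[k] (ModularGroup.S * ModularGroup.T * ModularGroup.S)
      = f ∣[k] (ModularGroup.S * ModularGroup.T) := hf.slash_eq_slash (Gamma0_mem.mpr (by decide))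
  have hSTT : f ∣[k] (ModularGroup.S * ModularGroup.T * ModularGroup.T)
      = f ∣[k] ModularGroup.S := hf.slash_eq_slash (Gamma0_mem.mpr (by decide))
  simp only [SlashAction.slash_mul] at hSS hSTS hSTT
  refine eq_zero_of_slash_eq_of_weight_lt_twelve hk
    ((hf.mdifferentiable.add hS).add (hS.slash k (ModularGroup.T : GL (Fin 2) ℝ))) ?_ ?_ ?_
  · simp only [SlashAction.add_slash, hSS, hSTS]
    rw [add_comm f]
  · simp only [SlashAction.add_slash, hT, hSTT]
    rw [add_right_comm]
  · rw [show (0 : ℂ) = 0 + 0 + 0 by norm_num]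
    exact (hf.tendsto.add hf.tendsto_slash_S).add (tendsto_slash_T hf.tendsto_slash_S)

/-- The traces of `f`, `f φ` and `f φ²` to level one vanish. Eliminating the conjugates of `f` from
these three equations leaves `f (φ - φ∣S) (φ - φ∣S T) = 0`. -/
lemma eq_zero_of_weight_lt_eight {φ : ℍ → ℂ} (hφ : IsGamma0TwoForm 2 c d φ) (hcd : c ≠ d)
    (hk : k < 8) (hf : IsGamma0TwoForm k 0 0 f) : f = 0 := by
  have hfφ : IsGamma0TwoForm (k + 2) 0 0 (f * φ) := by simpa using hf.mul hφ
  have hfφφ : IsGamma0TwoForm (k + 2 + 2) 0 0 (f * φ * φ) := by simpa using hfφ.mul hφ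
  have trace₀ := hf.add_slash_S_add_slash_S_slash_T_eq_zero (by lia)
  have trace₁ := hfφ.add_slash_S_add_slash_S_slash_T_eq_zero (by lia)
  have trace₂ := hfφφ.add_slash_S_add_slash_S_slash_T_eq_zero (by lia)
  simp only [ModularForm.mul_slash_SL2] at trace₁ trace₂
  set φS := φ ∣[(2 : ℤ)] ModularGroup.S
  set φST := φS ∣[(2 : ℤ)] ModularGroup.T
  have hφS : MDiff φS := hφ.mdifferentiable.slash 2 _
  have hφST : MDiff φST := hφS.slash 2 _
  have product_eq_zero : f * ((φ - φS) * (φ - φST)) = 0 := by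
    linear_combination trace₂ - (φS + φST) * trace₁ + φS * φST * trace₀
  refine ((mul_eq_zero_iff hf.mdifferentiable
    ((hφ.mdifferentiable.sub hφS).mul (hφ.mdifferentiable.sub hφST))).mp
    product_eq_zero).resolve_right fun h => ?_
  have limit : Tendsto ((φ - φS) * (φ - φST)) atImInfty (𝓝 ((c - d) * (c - d))) :=
    (hφ.tendsto.sub hφ.tendsto_slash_S).mul
      (hφ.tendsto.sub (tendsto_slash_T hφ.tendsto_slash_S))
  rw [h] at limit
  exact hcd (sub_eq_zero.mp (mul_self_eq_zero.mp (tendsto_nhds_unique limit tendsto_const_nhds)))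

end IsGamma0TwoForm

section QuasimodularE2

lemma E2_slash_eq_sub_smul_D2 (γ : SL(2, ℤ)) :
    E2 ∣[(2 : ℤ)] γ = E2 - (3 / Real.pi ^ 2 : ℂ) • D2 γ := by
  rw [E2_slash_action, riemannZeta_two]
  congr 2
  field_simp
  norm_num

/-- The weight two Eisenstein series `E₂(z) - 3 / (π Im z)`, modular but not holomorphic. -/
def completedE2 : ℍ → ℂ := fun z => E2 z - 3 / (Real.pi * z.im)

lemma completedE2_slash (γ : SL(2, ℤ)) : completedE2 ∣[(2 : ℤ)] γ = completedE2 := by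
  ext z
  have hE2 := congrFun (E2_slash_eq_sub_smul_D2 γ) z
  have hdenom : denom γ z ≠ 0 := denom_ne_zero _ z
  have him : (z.im : ℂ) ≠ 0 := ofReal_ne_zero.mpr z.im_ne_zero
  have hconj : starRingEnd ℂ (denom γ z) = denom γ z - 2 * I * γ 1 0 * z.im := by
    simp only [ModularGroup.denom_apply, map_add, map_mul, map_intCast]
    have hz := sub_conj (z : ℂ)
    rw [coe_im] at hz
    push_cast at hz
    linear_combination (-γ 1 0 : ℂ) * hz
  have hconj_ne := (map_ne_zero (starRingEnd ℂ)).mpr hdenom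
  rw [ModularForm.SL_slash_apply] at hE2 ⊢
  have him_smul : ((γ • z).im : ℂ) = z.im / (denom γ z * starRingEnd ℂ (denom γ z)) := by
    rw [ModularGroup.im_smul_eq_div_normSq, mul_conj, ofReal_div]
  simp only [completedE2, sub_mul, hE2, Pi.sub_apply, Pi.smul_apply, smul_eq_mul, D2, him_smul]
  field_simp
  rw [hconj]
  ring

lemma slash_diagGL_completedE2_sub (a d : ℕ) [NeZero a] [NeZero d] :
    completedE2 ∣[(2 : ℤ)] diagGL a d - completedE2 = E2 ∣[(2 : ℤ)] diagGL a d - E2 := by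
  ext z
  have him : (diagGL a d • z).im = a / d * z.im := by
    simpa using congrArg Complex.im (coe_diagGL_smul a d z)
  have ha : (a : ℂ) ≠ 0 := NeZero.ne _
  have hd : (d : ℂ) ≠ 0 := NeZero.ne _
  have hz : (z.im : ℂ) ≠ 0 := ofReal_ne_zero.mpr z.im_ne_zero
  simp only [Pi.sub_apply, slash_diagGL_apply, completedE2, him]
  push_cast
  field_simp
  ring

lemma normalizedDeriv_D2 (γ : SL(2, ℤ)) : D (D2 γ) = (4 * Real.pi ^ 2 : ℂ)⁻¹ • D2 γ ^ 2 := by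
  ext z
  have hz : denom γ z ≠ 0 := denom_ne_zero _ z
  have hderiv : HasDerivAt (D2 γ ∘ ofComplex) (-(2 * Real.pi * I) * (γ 1 0 / denom γ z) ^ 2) z := by
    refine (((hasDerivAt_denom_zpow (γ : GL (Fin 2) ℝ) (-1) z).const_mul
      (2 * Real.pi * I * γ 1 0)).congr_of_eventuallyEq ?_).congr_deriv ?_
    · filter_upwards [isOpen_upperHalfPlaneSet.mem_nhds z.im_pos] with w hw
      simp [D2, ofComplex_apply_of_im_pos hw, div_eq_mul_inv]
    · rw [Int.cast_neg, Int.cast_one, show (-1 - 1 : ℤ) = -2 from rfl, zpow_neg]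
      simp only [Matrix.SpecialLinearGroup.coe_GL_coe_matrix,
        Matrix.SpecialLinearGroup.map_apply_coe, RingHom.mapMatrix_apply, Int.coe_castRingHom,
        Matrix.map_apply, ofReal_intCast, neg_mul, one_mul, zpow_ofNat]
      field_simp
  simp only [Derivative.normalizedDerivOfComplex, hderiv.deriv, Pi.smul_apply, Pi.pow_apply, D2,
    smul_eq_mul]
  field_simp
  rw [I_sq]
  ring

lemma mdifferentiable_D2 (γ : SL(2, ℤ)) : MDiff (D2 γ) := by
  have hsub : D2 γ = (Real.pi ^ 2 / 3 : ℂ) • (E2 - E2 ∣[(2 : ℤ)] γ) := by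
    rw [E2_slash_eq_sub_smul_D2, sub_sub_cancel, smul_smul]
    field_simp
    rw [one_smul]
  rw [hsub]
  exact (E2_mdifferentiable.sub (E2_mdifferentiable.slash 2 _)).const_smul _

lemma normalizedDeriv_E2_slash (γ : SL(2, ℤ)) :
    D E2 ∣[(4 : ℤ)] γ = D E2 - (2 * Real.pi ^ 2 : ℂ)⁻¹ • (E2 * D2 γ)
      + (3 / (4 * Real.pi ^ 4) : ℂ) • D2 γ ^ 2 := by
  have deriv_slash : _ = D E2 ∣[(4 : ℤ)] γ - _ :=
    Derivative.normalizedDerivOfComplex_SL_slash (k := 2) E2_mdifferentiable (γ := γ)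
  rw [E2_slash_eq_sub_smul_D2, Derivative.normalizedDerivOfComplex_sub _ _ E2_mdifferentiable
    ((mdifferentiable_D2 γ).const_smul _), Derivative.normalizedDerivOfComplex_smul _ _
    (mdifferentiable_D2 γ), normalizedDeriv_D2] at deriv_slash
  ext z
  have hD2 : (2 * Real.pi * I : ℂ)⁻¹ * (γ 1 0 / denom γ z) = -(4 * Real.pi ^ 2 : ℂ)⁻¹ * D2 γ z := by
    rw [D2, mul_div_assoc]
    field_simp
    rw [I_sq]
    ring
  have deriv_slash_z := congrFun deriv_slash z
  simp only [Pi.sub_apply, Pi.smul_apply, Pi.pow_apply, smul_eq_mul, Int.cast_ofNat]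
    at deriv_slash_z
  simp only [Pi.sub_apply, Pi.smul_apply, Pi.mul_apply, Pi.add_apply, Pi.pow_apply, smul_eq_mul]
  linear_combination -deriv_slash_z + 2 * (E2 z - 3 / Real.pi ^ 2 * D2 γ z) * hD2

lemma E2_sq_sub_normalizedDeriv_E2_slash (γ : SL(2, ℤ)) :
    (E2 ^ 2 - (12 : ℂ) • D E2) ∣[(4 : ℤ)] γ = E2 ^ 2 - (12 : ℂ) • D E2 := by
  have sq_slash : (E2 * E2) ∣[(4 : ℤ)] γ = _ := ModularForm.mul_slash_SL2 2 2 γ E2 E2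
  rw [sub_eq_add_neg, SlashAction.add_slash, SlashAction.neg_slash, ModularForm.SL_smul_slash, sq,
    sq_slash, normalizedDeriv_E2_slash, E2_slash_eq_sub_smul_D2]
  ext z
  simp only [Pi.sub_apply, Pi.smul_apply, Pi.mul_apply, Pi.add_apply, Pi.neg_apply, Pi.pow_apply,
    smul_eq_mul]
  ring

lemma tendsto_E2_sq_sub_normalizedDeriv_E2 :
    Tendsto (E2 ^ 2 - (12 : ℂ) • D E2) atImInfty (𝓝 1) := by
  rw [show (1 : ℂ) = 1 ^ 2 - (12 : ℂ) • 0 by norm_num]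
  exact (tendsto_E2_atImInfty.pow 2).sub ((tendsto_normalizedDeriv_atImInfty
    E2_mdifferentiable tendsto_E2_atImInfty).const_smul (12 : ℂ))

end QuasimodularE2

section LevelTwo

/-- The weight two Eisenstein series `2 E₂(2z) - E₂(z)` for `Γ₀(2)`. -/
def levelTwoE2 : ℍ → ℂ := E2 ∣[(2 : ℤ)] diagGL 2 1 - E2

/-- The weight four Eisenstein series `(16 E₄(2z) - E₄(z)) / 15` for `Γ₀(2)`, normalized to be `1`
at the cusp `∞`; it vanishes at the cusp `0`. -/
def levelTwoE4 : ℍ → ℂ :=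
  (1 / 15 : ℂ) • ((2 : ℂ) • (⇑ModularForm.E₄ ∣[(4 : ℤ)] diagGL 2 1) - ⇑ModularForm.E₄)

lemma levelTwoE2_apply (z : ℍ) : levelTwoE2 z = 2 * E2 (diagGL 2 1 • z) - E2 z := by
  simp [levelTwoE2, slash_diagGL_apply, mul_comm]

lemma levelTwoE4_apply (z : ℍ) :
    levelTwoE4 z = (16 * ModularForm.E₄ (diagGL 2 1 • z) - ModularForm.E₄ z) / 15 := by
  simp only [levelTwoE4, Pi.smul_apply, Pi.sub_apply, slash_diagGL_apply, smul_eq_mul,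
    Nat.cast_ofNat, Nat.cast_one, mul_one, one_zpow]
  norm_num
  ring

lemma isGamma0TwoForm_levelTwoE2 : IsGamma0TwoForm 2 1 (-1 / 2) levelTwoE2 where
  mdifferentiable := (E2_mdifferentiable.slash 2 _).sub E2_mdifferentiable
  slash_eq γ hγ := by
    rw [levelTwoE2, ← slash_diagGL_completedE2_sub, sub_eq_add_neg, SlashAction.add_slash,
      SlashAction.neg_slash, slash_diagGL_slash_of_mem_Gamma0 2 completedE2_slash hγ,
      completedE2_slash]
  tendsto := by
    rw [show (1 : ℂ) = 1 * ((2 : ℕ) * (1 : ℕ)) ^ (2 - 1 : ℤ) * (1 : ℕ) ^ (-2 : ℤ) - 1 by norm_num]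
    exact (tendsto_slash_diagGL 2 1 tendsto_E2_atImInfty).sub tendsto_E2_atImInfty
  tendsto_slash_S := by
    rw [levelTwoE2, ← slash_diagGL_completedE2_sub, sub_eq_add_neg, SlashAction.add_slash,
      SlashAction.neg_slash, slash_diagGL_slash_S 2 1 (completedE2_slash _),
      completedE2_slash, ← sub_eq_add_neg, slash_diagGL_completedE2_sub,
      show (-1 / 2 : ℂ) = 1 * ((1 : ℕ) * (2 : ℕ)) ^ (2 - 1 : ℤ) * (2 : ℕ) ^ (-2 : ℤ) - 1 by
        norm_num]
    exact (tendsto_slash_diagGL 1 2 tendsto_E2_atImInfty).sub tendsto_E2_atImInfty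

lemma E₄_slash (γ : SL(2, ℤ)) : (ModularForm.E₄ : ℍ → ℂ) ∣[(4 : ℤ)] γ = ModularForm.E₄ :=
  SlashInvariantForm.slash_action_eqn (Γ := 𝒮ℒ) ModularForm.E₄ _ ⟨γ, rfl⟩

lemma isGamma0TwoForm_levelTwoE4 : IsGamma0TwoForm 4 1 0 levelTwoE4 := by
  have hE₄ : IsGamma0TwoForm 4 1 1 ModularForm.E₄ :=
    .of_level_one ModularForm.E₄.holo' E₄_slash tendsto_E₄_atImInfty
  have hE₄_two_mul :=
    IsGamma0TwoForm.slash_diagGL ModularForm.E₄.holo' E₄_slash tendsto_E₄_atImInfty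
  have h := ((hE₄_two_mul.const_smul 2).sub hE₄).const_smul (1 / 15)
  rw [levelTwoE4]
  convert h using 1 <;> norm_num

lemma IsGamma0TwoForm.ext_of_weight_lt_eight {k : ℤ} {a b : ℂ} {f g : ℍ → ℂ} (hk : k < 8)
    (hf : IsGamma0TwoForm k a b f) (hg : IsGamma0TwoForm k a b g) : f = g :=
  sub_eq_zero.mp <| isGamma0TwoForm_levelTwoE2.eq_zero_of_weight_lt_eight (by norm_num) hk <| by
    simpa using hf.sub hg

lemma serreDerivative_levelTwoE2 :
    Derivative.serreDerivative (2 : ℤ) levelTwoE2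
      = (1 / 3 : ℂ) • (levelTwoE2 * levelTwoE2) - (1 / 2 : ℂ) • levelTwoE4 := by
  have h2 := isGamma0TwoForm_levelTwoE2
  have hr := ((h2.mul h2).const_smul (1 / 3)).sub (isGamma0TwoForm_levelTwoE4.const_smul (1 / 2))
  refine h2.serreDerivative.ext_of_weight_lt_eight (by norm_num) ?_
  convert hr using 1 <;> norm_num

lemma serreDerivative_levelTwoE4 :
    Derivative.serreDerivative (4 : ℤ) levelTwoE4
      = (-1 / 3 : ℂ) • (levelTwoE2 * levelTwoE4) := by
  have h := (isGamma0TwoForm_levelTwoE2.mul isGamma0TwoForm_levelTwoE4).const_smul (-1 / 3)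
  refine isGamma0TwoForm_levelTwoE4.serreDerivative.ext_of_weight_lt_eight (by norm_num) ?_
  convert h using 1 <;> norm_num

lemma E2_sq_sub_normalizedDeriv_E2 :
    E2 ^ 2 - (12 : ℂ) • D E2 = (4 : ℂ) • (levelTwoE2 * levelTwoE2) - (3 : ℂ) • levelTwoE4 := by
  have h2 := isGamma0TwoForm_levelTwoE2
  have hr := ((h2.mul h2).const_smul 4).sub (isGamma0TwoForm_levelTwoE4.const_smul 3)
  have hdiff := (E2_mdifferentiable.pow 2).sub
    ((Derivative.normalizedDerivOfComplex_mdifferentiable E2_mdifferentiable).const_smul (12 : ℂ))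
  refine IsGamma0TwoForm.ext_of_weight_lt_eight (by norm_num) (.of_level_one hdiff
    E2_sq_sub_normalizedDeriv_E2_slash tendsto_E2_sq_sub_normalizedDeriv_E2) ?_
  convert hr using 1 <;> norm_num

end LevelTwo

section RamamaniFunctions

lemma qq_diagGL_smul (z : ℍ) : qq (diagGL 2 1 • z : ℍ) = qq z ^ 2 := by
  rw [coe_diagGL_smul, qq, qq, ← Complex.exp_nat_mul]
  congr 1
  push_cast
  ring

lemma EPt_coe (z : ℍ) : EPt z = levelTwoE2 z := by
  have h := tsum_lambert_one_add 1 (norm_qq_lt_one z)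
  simp only [pow_one] at h
  rw [EPt, h, levelTwoE2_apply, E2_eq_lambertSeries, E2_eq_lambertSeries, qq_diagGL_smul]
  ring

lemma EP_coe (z : ℍ) : EP z = ((1 / 3 : ℂ) • ((2 : ℂ) • levelTwoE2 + E2)) z := by
  have h := tsum_neg_one_pow_mul_lambert 1 (norm_qq_lt_one z)
  simp only [pow_one] at h
  simp only [EP, h, Pi.smul_apply, Pi.add_apply, smul_eq_mul, levelTwoE2_apply,
    E2_eq_lambertSeries, qq_diagGL_smul]
  ring

lemma EQ_coe (z : ℍ) : EQ z = levelTwoE4 z := by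
  rw [EQ, tsum_neg_one_pow_mul_lambert 3 (norm_qq_lt_one z), levelTwoE4_apply,
    E₄_eq_lambertSeries, E₄_eq_lambertSeries, qq_diagGL_smul]
  ring

lemma nderiv_coe {F : ℂ → ℂ} {f : ℍ → ℂ} (h : ∀ z : ℍ, F z = f z) (z : ℍ) :
    nderiv F z = D f z := by
  have heq : F =ᶠ[𝓝 (z : ℂ)] f ∘ ofComplex := by
    filter_upwards [isOpen_upperHalfPlaneSet.mem_nhds z.im_pos] with w hw
    simpa [ofComplex_apply_of_im_pos hw] using h ⟨w, hw⟩
  rw [nderiv, heq.deriv_eq]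
  rfl

lemma nderiv_EP_coe (z : ℍ) : nderiv EP z = (2 * D levelTwoE2 z + D E2 z) / 3 := by
  have hdiff := isGamma0TwoForm_levelTwoE2.mdifferentiable
  rw [nderiv_coe EP_coe,
    Derivative.normalizedDerivOfComplex_smul _ _ ((hdiff.const_smul 2).add E2_mdifferentiable),
    Derivative.normalizedDerivOfComplex_add _ _ (hdiff.const_smul 2) E2_mdifferentiable,
    Derivative.normalizedDerivOfComplex_smul _ _ hdiff]
  simp only [Pi.smul_apply, Pi.add_apply, smul_eq_mul]
  ring

end RamamaniFunctions

/-- Ramamani's analogue of the Ramanujan system on `Γ₀(2)`. -/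
theorem ramamani_system :
    ∀ τ : ℂ, 0 < τ.im →
      nderiv EP τ = (EP τ ^ 2 - EQ τ) / 4 ∧
      nderiv EPt τ = (EP τ * EPt τ - EQ τ) / 2 ∧
      nderiv EQ τ = (EP τ - EPt τ) * EQ τ := by
  intro τ hτ
  obtain ⟨z, rfl⟩ : ∃ z : ℍ, (z : ℂ) = τ := ⟨⟨τ, hτ⟩, rfl⟩
  have hE2 := congrFun E2_sq_sub_normalizedDeriv_E2 z
  have hP₂ := congrFun serreDerivative_levelTwoE2 z
  have hQ₂ := congrFun serreDerivative_levelTwoE4 z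
  rw [nderiv_EP_coe, nderiv_coe EPt_coe, nderiv_coe EQ_coe, EP_coe, EPt_coe, EQ_coe]
  simp only [Derivative.serreDerivative_apply, Pi.sub_apply, Pi.add_apply, Pi.smul_apply,
    Pi.mul_apply, Pi.pow_apply, smul_eq_mul, Int.cast_ofNat] at hE2 hP₂ hQ₂ ⊢
  refine ⟨?_, ?_, ?_⟩
  · linear_combination (2 / 3) * hP₂ - (1 / 36) * hE2
  · linear_combination hP₂
  · linear_combination hQ₂
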